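/- arXiv:0810.1195 — 2 statements merged into one kernel-verified Lean document; each statement's English description precedes it below -/
import Mathlib

section
/- For every E′ > 0 and all n, m ∈ ℕ₀, the resonance eigenfunctions satisfy the bi-orthonormality relation lim_{ε→0⁺} ∫_ℝ e^{−εq²} conj(f_n^+(q)) f_m^−(q) dq = δ_{nm}, and likewise lim_{ε→0⁺} ∫_ℝ e^{−εq²} conj(f_n^−(q)) f_m^+(q) dq = δ_{nm}. -/
open MeasureTheory Filter Complex

/-- Physicists' Hermite polynomials. -/
noncomputable def hermitePoly : ℕ → ℂ → ℂ
  | 0, _ => 1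
  | 1, y => 2 * y
  | (n + 2), y => 2 * y * hermitePoly (n + 1) y - 2 * (n + 1) * hermitePoly n y

/-- The generalized (resonance) eigenfunctions `f_n^±` (sign `s = ±1`). -/
noncomputable def fres (E' s : ℝ) (n : ℕ) (q : ℝ) : ℂ :=
  (((E' / Real.pi) ^ ((1 : ℝ) / 4) : ℝ) : ℂ) *
    (((Real.sqrt (2 ^ n * n.factorial) : ℝ) : ℂ))⁻¹ *
    Complex.exp ((s : ℂ) * Complex.I * (Real.pi : ℂ) / 8) *
    Complex.exp (-(s : ℂ) * Complex.I * ((E' / 2 : ℝ) : ℂ) * (q : ℂ) ^ 2) *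
    hermitePoly n (Complex.exp ((s : ℂ) * Complex.I * (Real.pi : ℂ) / 4) *
      ((Real.sqrt E' : ℝ) : ℂ) * (q : ℂ))

/-!
Conjugation exchanges `f_n^+` and `f_n^-`, so both integrands have the form
`e^{-εq²} f_n^± f_m^±`, a multiple of `H_n(aq) H_m(aq) e^{-bq²}` with `a = e^{±iπ/4} √E'` and
`b = ε + a²`. For `Re b > 0` the integral of a polynomial against `e^{-bq²}` is `(π/b)^{1/2}` times
its mean under the formal Gaussian of variance `1/(2b)`. That mean is a polynomial in the variance,
so it makes sense at `b = a²`, where the integral no longer converges absolutely, and is the limit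
there. In the variable `aq` the limiting variance is `1/2`, the one for which integration by parts
makes the `H_n` orthogonal.
-/

open Polynomial Topology ComplexConjugate
open Real (pi_pos)
open scoped Real

section GaussianMean

variable {R A : Type*} [CommSemiring R] [CommSemiring A] [Algebra R A]

/-- The moments of the centred Gaussian of variance `v`, as elements of the ring containing `v`:
the recursion makes sense for every `v`, in particular for the complex variances needed here. -/
def gaussianMoment (v : R) : ℕ → R
  | 0 => 1
  | 1 => 0
  | k + 2 => (k + 1) * v * gaussianMoment v k

/-- The mean of a polynomial under the formal centred Gaussian of variance `v`. -/
noncomputable def gaussianMean (v : R) : R[X] →ₗ[R] R :=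
  lsum fun k => LinearMap.mulLeft R (gaussianMoment v k)

lemma gaussianMean_monomial (v : R) (k : ℕ) (r : R) :
    gaussianMean v (monomial k r) = gaussianMoment v k * r := by
  simp [gaussianMean, lsum_apply]

lemma gaussianMean_X_mul (v : R) (p : R[X]) :
    gaussianMean v (X * p) = v * gaussianMean v (derivative p) := by
  induction p using Polynomial.induction_on' with
  | add p q hp hq => simp only [mul_add, map_add, hp, hq]
  | monomial k r =>
    rw [X_mul_monomial, derivative_monomial, gaussianMean_monomial, gaussianMean_monomial]
    cases k with
    | zero => simp [gaussianMoment]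
    | succ k => simp only [gaussianMoment, Nat.add_sub_cancel, Nat.cast_succ]; ring

lemma pow_mul_gaussianMoment {u : R} {v c : A} (h : c ^ 2 * v = algebraMap R A u) (k : ℕ) :
    c ^ k * gaussianMoment v k = algebraMap R A (gaussianMoment u k) := by
  induction k using Nat.twoStepInduction with
  | zero => simp [gaussianMoment]
  | one => simp [gaussianMoment]
  | more k ih _ =>
    calc c ^ (k + 2) * gaussianMoment v (k + 2)
        = (k + 1) * (c ^ 2 * v) * (c ^ k * gaussianMoment v k) := by
          rw [gaussianMoment]; ring
      _ = algebraMap R A (gaussianMoment u (k + 2)) := by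
          rw [h, ih]; simp [gaussianMoment]

lemma eval_aeval_C_mul_X (c x : A) (p : R[X]) :
    (aeval (C c * X : A[X]) p).eval x = aeval (c * x) p := by
  have hcomp := aeval_algHom_apply ((aeval x : A[X] →ₐ[A] A).restrictScalars R) (C c * X) p
  simpa only [AlgHom.coe_restrictScalars', coe_aeval_eq_eval, eval_mul, eval_C, eval_X]
    using hcomp.symm

lemma gaussianMean_aeval {u : R} {v c : A} (h : c ^ 2 * v = algebraMap R A u) (p : R[X]) :
    gaussianMean v (aeval (C c * X) p) = algebraMap R A (gaussianMean u p) := by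
  induction p using Polynomial.induction_on' with
  | add p q hp hq => simp only [map_add, hp, hq]
  | monomial k r =>
    have hmonomial : aeval (C c * X) (monomial k r) = monomial k (algebraMap R A r * c ^ k) := by
      rw [aeval_monomial, mul_pow, ← C_pow, ← C_mul_X_pow_eq_monomial, C_mul, mul_assoc]
      rfl
    rw [hmonomial, gaussianMean_monomial, gaussianMean_monomial, map_mul,
      ← pow_mul_gaussianMoment h k]
    ring

lemma continuous_gaussianMoment [TopologicalSpace R] [IsTopologicalSemiring R] (k : ℕ) :
    Continuous fun v : R => gaussianMoment v k := by
  induction k using Nat.twoStepInduction with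
  | zero => exact continuous_const
  | one => exact continuous_const
  | more k ih _ => exact (continuous_const.mul continuous_id).mul ih

lemma continuous_gaussianMean [TopologicalSpace R] [IsTopologicalSemiring R] (p : R[X]) :
    Continuous fun v : R => gaussianMean v p := by
  induction p using Polynomial.induction_on' with
  | add p q hp hq => simp only [map_add]; exact hp.add hq
  | monomial k r =>
    simp only [gaussianMean_monomial]; exact (continuous_gaussianMoment k).mul continuous_const

end GaussianMean

section HermiteOrthogonality

lemma derivative_hermite_succ (n : ℕ) :
    derivative (hermite (n + 1)) = (n + 1 : ℤ[X]) * hermite n := by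
  induction n with
  | zero => simp
  | succ n ih =>
    rw [hermite_succ (n + 1), derivative_sub, derivative_mul, derivative_X, ih, derivative_mul,
      hermite_succ n]
    simp only [derivative_add, derivative_natCast, derivative_one, Nat.cast_add, Nat.cast_one]
    ring

lemma gaussianMean_hermite_succ_mul (n : ℕ) (p : ℤ[X]) :
    gaussianMean 1 (hermite (n + 1) * p) = gaussianMean 1 (hermite n * derivative p) := by
  have hparts := gaussianMean_X_mul 1 (hermite n * p)
  rw [derivative_mul, map_add, one_mul] at hparts
  rw [hermite_succ, sub_mul, map_sub, mul_assoc, hparts]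
  ring

theorem gaussianMean_hermite_mul_hermite (n m : ℕ) :
    gaussianMean 1 (hermite n * hermite m) = if n = m then (n.factorial : ℤ) else 0 := by
  induction n generalizing m with
  | zero =>
    cases m with
    | zero => simpa [gaussianMoment] using gaussianMean_monomial (1 : ℤ) 0 1
    | succ m => rw [mul_comm, gaussianMean_hermite_succ_mul]; simp
  | succ n ih =>
    rw [gaussianMean_hermite_succ_mul]
    cases m with
    | zero => simp
    | succ m =>
      have hlower : hermite n * derivative (hermite (m + 1))
          = (m + 1 : ℤ) • (hermite n * hermite m) := by
        rw [derivative_hermite_succ, zsmul_eq_mul]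
        push_cast
        ring
      rw [hlower, map_zsmul, ih]
      by_cases h : n = m
      · simp [h, Nat.factorial_succ]
      · simp [h]

end HermiteOrthogonality

section GaussianIntegral

variable {b : ℂ}

lemma integrable_pow_mul_cexp_neg_mul_sq (hb : 0 < b.re) (k : ℕ) :
    Integrable fun q : ℝ => (q : ℂ) ^ k * cexp (-b * q ^ 2) := by
  have hreal := integrable_rpow_mul_exp_neg_mul_sq hb
    (neg_one_lt_zero.trans_le (Nat.cast_nonneg k))
  refine hreal.norm.mono' (by fun_prop) (ae_of_all _ fun q => le_of_eq ?_)
  simp only [norm_mul, norm_pow, norm_real, Real.norm_eq_abs, norm_cexp_neg_mul_sq,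
    Real.rpow_natCast, Real.abs_exp]

lemma integrable_eval_mul_cexp_neg_mul_sq (hb : 0 < b.re) (p : ℂ[X]) :
    Integrable fun q : ℝ => p.eval (q : ℂ) * cexp (-b * q ^ 2) := by
  induction p using Polynomial.induction_on' with
  | add p r hp hr => simp only [eval_add, add_mul]; exact hp.add hr
  | monomial k c =>
    simpa only [eval_monomial, mul_assoc] using
      (integrable_pow_mul_cexp_neg_mul_sq hb k).const_mul c

lemma hasDerivAt_eval_mul_cexp_neg_mul_sq (b : ℂ) (p : ℂ[X]) (q : ℝ) :
    HasDerivAt (fun q : ℝ => p.eval (q : ℂ) * cexp (-b * q ^ 2))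
      ((derivative p).eval (q : ℂ) * cexp (-b * q ^ 2)
        - 2 * b * ((X * p).eval (q : ℂ) * cexp (-b * q ^ 2))) q := by
  have hexp := (((hasDerivAt_id (q : ℂ)).pow 2).const_mul (-b)).cexp
  convert! ((p.hasDerivAt (q : ℂ)).mul hexp).comp_ofReal using 1
  simp only [eval_mul, eval_X, Pi.pow_apply, id_eq, Nat.cast_ofNat, Nat.add_one_sub_one, pow_one]
  ring

lemma integral_eval_derivative_mul_cexp_neg_mul_sq (hb : 0 < b.re) (p : ℂ[X]) :
    ∫ q : ℝ, (derivative p).eval (q : ℂ) * cexp (-b * q ^ 2)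
      = 2 * b * ∫ q : ℝ, (X * p).eval (q : ℂ) * cexp (-b * q ^ 2) := by
  have hderiv := integrable_eval_mul_cexp_neg_mul_sq hb (derivative p)
  have hX := (integrable_eval_mul_cexp_neg_mul_sq hb (X * p)).const_mul (2 * b)
  have hzero := integral_eq_zero_of_hasDerivAt_of_integrable
    (hasDerivAt_eval_mul_cexp_neg_mul_sq b p) (hderiv.sub hX)
    (integrable_eval_mul_cexp_neg_mul_sq hb p)
  rwa [integral_sub hderiv hX, integral_const_mul, sub_eq_zero] at hzero

lemma integral_pow_mul_cexp_neg_mul_sq (hb : 0 < b.re) (k : ℕ) :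
    ∫ q : ℝ, (q : ℂ) ^ k * cexp (-b * q ^ 2)
      = (π / b) ^ (1 / 2 : ℂ) * gaussianMoment (2 * b)⁻¹ k := by
  have hb0 : b ≠ 0 := by rintro rfl; simp at hb
  induction k using Nat.twoStepInduction with
  | zero => simpa [gaussianMoment] using integral_gaussian_complex hb
  | one =>
    have hparts := integral_eval_derivative_mul_cexp_neg_mul_sq hb 1
    simpa [hb0, gaussianMoment] using hparts
  | more k ih _ =>
    have hparts := integral_eval_derivative_mul_cexp_neg_mul_sq hb (X ^ (k + 1))
    simp only [derivative_X_pow, ← pow_succ', eval_mul, eval_pow, eval_X, eval_C, mul_assoc,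
      integral_const_mul, Nat.add_sub_cancel, ih] at hparts
    refine mul_left_cancel₀ (mul_ne_zero two_ne_zero hb0) ?_
    rw [mul_assoc, ← hparts, gaussianMoment]
    push_cast
    field_simp

theorem integral_eval_mul_cexp_neg_mul_sq (hb : 0 < b.re) (p : ℂ[X]) :
    ∫ q : ℝ, p.eval (q : ℂ) * cexp (-b * q ^ 2)
      = (π / b) ^ (1 / 2 : ℂ) * gaussianMean (2 * b)⁻¹ p := by
  induction p using Polynomial.induction_on' with
  | add p r hp hr =>
    simp only [eval_add, add_mul, map_add, mul_add, ← hp, ← hr]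
    exact integral_add (integrable_eval_mul_cexp_neg_mul_sq hb p)
      (integrable_eval_mul_cexp_neg_mul_sq hb r)
  | monomial k c =>
    simp only [eval_monomial, mul_assoc, integral_const_mul, integral_pow_mul_cexp_neg_mul_sq hb,
      gaussianMean_monomial]
    ring

theorem tendsto_integral_eval_mul_cexp_neg_mul_sq (hb : 0 ≤ b.re) (hb0 : b ≠ 0) (p : ℂ[X]) :
    Tendsto (fun z : ℂ => ∫ q : ℝ, p.eval (q : ℂ) * cexp (-z * q ^ 2)) (𝓝[{z | 0 < z.re}] b)
      (𝓝 ((π / b) ^ (1 / 2 : ℂ) * gaussianMean (2 * b)⁻¹ p)) := by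
  have hroot : ContinuousAt (fun z : ℂ => (π / z) ^ (1 / 2 : ℂ)) b := by
    have hre : 0 ≤ (π / b : ℂ).re := by
      rw [div_re, ofReal_re, ofReal_im, zero_mul, zero_div, add_zero]
      exact div_nonneg (mul_nonneg pi_pos.le hb) (normSq_nonneg b)
    exact (continuousAt_cpow_const_of_re_pos (Or.inl hre) (by norm_num)).comp
      (continuousAt_const.div continuousAt_id hb0)
  have hmean : ContinuousAt (fun z : ℂ => gaussianMean (2 * z)⁻¹ p) b :=
    (continuous_gaussianMean p).continuousAt.comp
      ((continuousAt_const.mul continuousAt_id).inv₀ (mul_ne_zero two_ne_zero hb0))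
  refine ((hroot.mul hmean).tendsto.mono_left nhdsWithin_le_nhds).congr' ?_
  filter_upwards [self_mem_nhdsWithin] with z hz
  exact (integral_eval_mul_cexp_neg_mul_sq hz p).symm

lemma tendsto_ofReal_add_nhdsWithin_re_pos {z : ℂ} (hz : 0 ≤ z.re) :
    Tendsto (fun ε : ℝ => ε + z) (𝓝[>] 0) (𝓝[{w | 0 < w.re}] z) := by
  refine tendsto_nhdsWithin_iff.mpr ⟨?_, ?_⟩
  · have hcont : Continuous fun ε : ℝ => ε + z := by fun_prop
    simpa using (hcont.tendsto 0).mono_left nhdsWithin_le_nhds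
  · filter_upwards [self_mem_nhdsWithin] with ε hε
    simpa using add_pos_of_pos_of_nonneg hε hz

end GaussianIntegral

section PhysicistsHermite

lemma ofReal_sqrt_sq {x : ℝ} (hx : 0 ≤ x) : (√x : ℂ) ^ 2 = x := by
  rw [← ofReal_pow, Real.sq_sqrt hx]

lemma hermitePoly_eq_aeval_hermite (n : ℕ) (y : ℂ) :
    hermitePoly n y = (√2 : ℂ) ^ n * aeval (√2 * y : ℂ) (hermite n) := by
  have hsqrt : (√2 : ℂ) ^ 2 = 2 := mod_cast ofReal_sqrt_sq zero_le_two
  induction n using Nat.twoStepInduction with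
  | zero => simp [hermitePoly]
  | one =>
    simp only [hermitePoly, hermite_one, aeval_X]
    linear_combination -y * hsqrt
  | more n ih₀ ih₁ =>
    rw [hermitePoly, ih₀, ih₁, hermite_succ (n + 1), derivative_hermite_succ]
    simp only [map_sub, map_mul, aeval_X, map_add, map_natCast, map_one]
    linear_combination -(√2 : ℂ) ^ n * (√2 * y * aeval (√2 * y : ℂ) (hermite (n + 1))
      - (n + 1) * aeval (√2 * y : ℂ) (hermite n)) * hsqrt

lemma conj_hermitePoly (n : ℕ) (y : ℂ) :
    conj (hermitePoly n y) = hermitePoly n (conj y) := by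
  simp only [hermitePoly_eq_aeval_hermite, map_mul, map_pow, conj_ofReal]
  congr 1
  simpa only [RingHom.toIntAlgHom_coe, map_mul, conj_ofReal] using
    (aeval_algHom_apply (starRingEnd ℂ).toIntAlgHom (√2 * y : ℂ) (hermite n)).symm

lemma ofReal_div_sq_cpow_half {x : ℝ} {a : ℂ} (hx : 0 < x) (ha : 0 < a.re) :
    (x / a ^ 2 : ℂ) ^ (1 / 2 : ℂ) = √x / a := by
  have hre : 0 < (√x / a : ℂ).re := by
    have ha0 : 0 < normSq a := normSq_pos.mpr (by rintro rfl; simp at ha)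
    rw [div_re, ofReal_re, ofReal_im, zero_mul, zero_div, add_zero]
    positivity
  have hsq : (x / a ^ 2 : ℂ) = (√x / a) ^ 2 := by
    rw [div_pow, ofReal_sqrt_sq hx.le]
  rw [hsq, one_div, sq_cpow_two_inv hre]

theorem tendsto_integral_hermitePoly_mul_hermitePoly {a : ℂ} (ha : 0 < a.re)
    (ha2 : 0 ≤ (a ^ 2).re) (n m : ℕ) :
    Tendsto (fun z : ℂ => ∫ q : ℝ,
        hermitePoly n (a * q) * hermitePoly m (a * q) * cexp (-z * q ^ 2))
      (𝓝[{z | 0 < z.re}] (a ^ 2))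
      (𝓝 (if n = m then √π / a * (2 ^ n * n.factorial) else 0)) := by
  have ha0 : a ≠ 0 := by rintro rfl; simp at ha
  have hsqrt : (√2 : ℂ) ^ 2 = 2 := mod_cast ofReal_sqrt_sq zero_le_two
  have hvariance : (√2 * a) ^ 2 * (2 * a ^ 2)⁻¹ = algebraMap ℤ ℂ 1 := by
    rw [mul_pow, hsqrt, map_one]
    field_simp
  have heval (q : ℝ) : hermitePoly n (a * q) * hermitePoly m (a * q)
      = (√2 : ℂ) ^ (n + m) * (aeval (C (√2 * a) * X) (hermite n * hermite m)).eval (q : ℂ) := by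
    rw [eval_aeval_C_mul_X, map_mul, mul_assoc, hermitePoly_eq_aeval_hermite,
      hermitePoly_eq_aeval_hermite]
    ring
  have hlim := (tendsto_integral_eval_mul_cexp_neg_mul_sq ha2 (pow_ne_zero 2 ha0)
    (aeval (C (√2 * a) * X) (hermite n * hermite m))).const_mul ((√2 : ℂ) ^ (n + m))
  simp_rw [heval, mul_assoc, integral_const_mul]
  convert hlim using 2
  rw [gaussianMean_aeval hvariance, gaussianMean_hermite_mul_hermite,
    ofReal_div_sq_cpow_half pi_pos ha]
  split_ifs with h
  · subst h
    rw [← two_mul, pow_mul, hsqrt, algebraMap_int_eq, eq_intCast, Int.cast_natCast]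
    ring
  · simp

end PhysicistsHermite

section Resonance

variable {E' s : ℝ}

/-- The complex scaling `a = e^{isπ/4} √E'`: for `s = ±1`, `f_n^s(q)` is up to a constant the
Hermite function `H_n(x) e^{-x²/2}` of the harmonic oscillator at `x = aq`. -/
noncomputable def resonanceScale (E' s : ℝ) : ℂ :=
  cexp (s * I * π / 4) * √E'

lemma resonanceScale_re_pos (hE' : 0 < E') (hs : |s| < 2) : 0 < (resonanceScale E' s).re := by
  have hphase : (s * I * π / 4 : ℂ) = (s * π / 4 : ℝ) * I := by push_cast; ring
  obtain ⟨hs_lower, hs_upper⟩ := abs_lt.mp hs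
  rw [resonanceScale, re_mul_ofReal, hphase, exp_ofReal_mul_I_re]
  refine mul_pos (Real.cos_pos_of_mem_Ioo ⟨?_, ?_⟩) (Real.sqrt_pos.mpr hE') <;>
    nlinarith [pi_pos]

lemma resonanceScale_sq (hE' : 0 ≤ E') (hs : s = 1 ∨ s = -1) :
    resonanceScale E' s ^ 2 = s * I * E' := by
  have hphase : cexp (s * I * π / 4) ^ 2 = s * I := by
    have hdouble : ((2 : ℕ) : ℂ) * (s * I * π / 4) = s * (π / 2 * I) := by push_cast; ring
    rw [← exp_nat_mul, hdouble]
    rcases hs with rfl | rfl <;> simp [Complex.exp_neg, exp_pi_div_two_mul_I]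
  rw [resonanceScale, mul_pow, hphase, ofReal_sqrt_sq hE']

lemma conj_fres (E' s : ℝ) (n : ℕ) (q : ℝ) : conj (fres E' s n q) = fres E' (-s) n q := by
  simp only [fres, map_mul, conj_hermitePoly, ← exp_conj, map_inv₀, conj_ofReal, map_div₀,
    map_neg, map_pow, conj_I, ofReal_neg, map_ofNat, neg_mul, mul_neg, neg_neg]

lemma exp_mul_fres_mul_fres (hE' : 0 ≤ E') (hs : s = 1 ∨ s = -1) (n m : ℕ) (ε q : ℝ) :
    (Real.exp (-(ε * q ^ 2)) : ℂ) * fres E' s n q * fres E' s m q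
      = resonanceScale E' s / √π * ((√(2 ^ n * n.factorial))⁻¹ * (√(2 ^ m * m.factorial))⁻¹ : ℝ) *
        (hermitePoly n (resonanceScale E' s * q) * hermitePoly m (resonanceScale E' s * q) *
          cexp (-(ε + resonanceScale E' s ^ 2) * q ^ 2)) := by
  have hconst : ((((E' / π) ^ ((1 : ℝ) / 4) : ℝ) : ℂ) * cexp (s * I * π / 8)) ^ 2
      = resonanceScale E' s / √π := by
    have hquarter : ((E' / π) ^ ((1 : ℝ) / 4)) ^ 2 = √E' / √π := by
      rw [← Real.rpow_mul_natCast (by positivity), ← Real.sqrt_div hE', Real.sqrt_eq_rpow]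
      norm_num
    rw [mul_pow, ← ofReal_pow, hquarter, ← exp_nat_mul, resonanceScale]
    push_cast
    ring_nf
  have hexp : (Real.exp (-(ε * q ^ 2)) : ℂ) * cexp (-s * I * (E' / 2 : ℝ) * q ^ 2) ^ 2
      = cexp (-(ε + resonanceScale E' s ^ 2) * q ^ 2) := by
    rw [ofReal_exp, ← exp_nat_mul, ← Complex.exp_add, resonanceScale_sq hE' hs]
    push_cast
    ring_nf
  rw [← hconst, ← hexp, resonanceScale]
  unfold fres
  push_cast
  ring

theorem tendsto_integral_fres_mul_fres (hE' : 0 < E') (hs : s = 1 ∨ s = -1) (n m : ℕ) :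
    Tendsto (fun ε : ℝ => ∫ q : ℝ, (Real.exp (-(ε * q ^ 2)) : ℂ) * fres E' s n q * fres E' s m q)
      (𝓝[>] 0) (𝓝 (if n = m then 1 else 0)) := by
  set a := resonanceScale E' s with ha
  have ha_re : 0 < a.re := resonanceScale_re_pos hE' (by rcases hs with rfl | rfl <;> norm_num)
  have ha_sq_re : (a ^ 2).re = 0 := by simp [ha, resonanceScale_sq hE'.le hs]
  set κ : ℂ := a / √π * ((√(2 ^ n * n.factorial))⁻¹ * (√(2 ^ m * m.factorial))⁻¹ : ℝ) with hκ
  have hlimit : κ * (if n = m then √π / a * (2 ^ n * n.factorial) else 0)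
      = if n = m then 1 else 0 := by
    split_ifs with h
    · have ha0 : a ≠ 0 := by rintro h0; simp [h0] at ha_re
      have hfactorial : ((√(2 ^ m * m.factorial))⁻¹ * (√(2 ^ m * m.factorial))⁻¹ : ℝ)
          = ((2 : ℝ) ^ m * m.factorial)⁻¹ := by
        rw [← mul_inv, Real.mul_self_sqrt (by positivity)]
      have hfactorial_ne : (m.factorial : ℂ) ≠ 0 := mod_cast m.factorial_ne_zero
      have hpi_ne : (√π : ℂ) ≠ 0 := mod_cast (Real.sqrt_pos.mpr pi_pos).ne'
      rw [hκ, h, hfactorial]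
      push_cast
      field_simp
    · exact mul_zero κ
  rw [← hlimit]
  refine (((tendsto_integral_hermitePoly_mul_hermitePoly ha_re ha_sq_re.ge n m).comp
    (tendsto_ofReal_add_nhdsWithin_re_pos ha_sq_re.ge)).const_mul κ).congr fun ε => ?_
  simp only [Function.comp_apply, exp_mul_fres_mul_fres hE'.le hs, ← ha, ← hκ, integral_const_mul]

end Resonance

/-- bi-orthonormality of the resonance eigenfunctions:
`lim_{ε→0⁺} ∫ e^{−εq²} conj(f_n^+) f_m^− dq = δ_{nm}`, and likewise with the
signs interchanged. -/
theorem fres_biorthonormal (E' : ℝ) (hE' : 0 < E') (n m : ℕ) :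
    Filter.Tendsto
        (fun ε : ℝ => ∫ q : ℝ,
          ((Real.exp (-(ε * q ^ 2)) : ℝ) : ℂ) *
            (starRingEnd ℂ) (fres E' 1 n q) * fres E' (-1) m q)
        (nhdsWithin (0 : ℝ) (Set.Ioi 0)) (nhds (if n = m then 1 else 0))
      ∧ Filter.Tendsto
          (fun ε : ℝ => ∫ q : ℝ,
            ((Real.exp (-(ε * q ^ 2)) : ℝ) : ℂ) *
              (starRingEnd ℂ) (fres E' (-1) n q) * fres E' 1 m q)
          (nhdsWithin (0 : ℝ) (Set.Ioi 0)) (nhds (if n = m then 1 else 0)) := by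
  simp_rw [conj_fres]
  refine ⟨tendsto_integral_fres_mul_fres hE' (Or.inr rfl) n m, ?_⟩
  simpa using tendsto_integral_fres_mul_fres hE' (Or.inl rfl) n m
end

section
/- Let E′ > 0. For every 𝓔 ∈ ℝ and every ε > 0 there exists a smooth compactly supported function φ: ℝ → ℂ with ‖φ‖_{L²(ℝ)} = 1 and ‖−½φ'' − (E′²/2)q²φ − 𝓔φ‖_{L²(ℝ)} ≤ ε. In other words, every real number is an approximate eigenvalue, so the spectrum of the inverted harmonic oscillator H = ½(−∂_q² − E′²q²) is all of ℝ. -/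
open MeasureTheory Filter Complex

/-!
Multiplication by the chirp `exp (i w q² / 2)` conjugates `H = ½(−∂_q² − w²q²)` into
`−½ ∂_q² − i w A`, where `A = q ∂_q + ½` generates the `L²`-unitary dilations. Those dilations
commute with `A` and scale `∂_q²` by an arbitrarily small factor, so the `A`-part alone decides
approximate eigenvalues. On the positive half-line the substitution `q = eᵗ` turns `A` into `∂_t`,
for which `exp (i κ t)` with a slowly varying envelope is an approximate eigenfunction with
eigenvalue `i κ`; the energy `𝓔` corresponds to `κ = 𝓔 / w`. Every transformation used is an
`L²`-isometry preserving smooth compactly supported functions, so normalization is never lost.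
-/

namespace InvertedOscillator

open scoped Topology ContDiff

theorem exists_contDiff_hasCompactSupport_eLpNorm_eq_one {V E : Type*} [NormedAddCommGroup V]
    [NormedSpace ℝ V] [FiniteDimensional ℝ V] [MeasurableSpace V] [BorelSpace V]
    [NormedAddCommGroup E] [NormedSpace ℝ E] [Nontrivial E] (μ : Measure V)
    [IsFiniteMeasureOnCompacts μ] [μ.IsOpenPosMeasure] {p : ENNReal} (hp : p ≠ 0) :
    ∃ f : V → E, ContDiff ℝ ∞ f ∧ HasCompactSupport f ∧ eLpNorm f p μ = 1 := by
  obtain ⟨v, hv⟩ := exists_ne (0 : E)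
  let b : ContDiffBump (0 : V) := default
  let g : V → E := fun x => b x • v
  have hg : ContDiff ℝ ∞ g := b.contDiff.smul contDiff_const
  have hgc : HasCompactSupport g := b.hasCompactSupport.smul_right
  have hg_top : eLpNorm g p μ ≠ ⊤ := (hg.continuous.memLp_of_hasCompactSupport hgc).eLpNorm_ne_top
  have hg_zero : eLpNorm g p μ ≠ 0 := by
    rw [Ne, eLpNorm_eq_zero_iff hg.continuous.aestronglyMeasurable hp,
      hg.continuous.ae_eq_iff_eq μ continuous_zero]
    intro h
    have hb : b 0 = 1 := b.one_of_mem_closedBall (by simp [b.rIn_pos.le])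
    simpa [g, hb, hv] using congrFun h 0
  refine ⟨(eLpNorm g p μ).toReal⁻¹ • g, contDiff_const.smul hg, hgc.smul_left, ?_⟩
  rw [eLpNorm_const_smul, enorm_inv (ENNReal.toReal_ne_zero.2 ⟨hg_zero, hg_top⟩),
    Real.enorm_of_nonneg ENNReal.toReal_nonneg, ENNReal.ofReal_toReal hg_top,
    ENNReal.inv_mul_cancel hg_zero hg_top]

theorem exists_pos_ofReal_pow_mul_le {k : ℕ} (hk : k ≠ 0) {C : ENNReal} (hC : C ≠ ⊤) {ε : ℝ}
    (hε : 0 < ε) : ∃ c : ℝ, 0 < c ∧ ENNReal.ofReal (c ^ k) * C ≤ ENNReal.ofReal ε := by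
  have hlim : Tendsto (fun c : ℝ => ENNReal.ofReal (c ^ k) * C) (𝓝[>] 0) (𝓝 0) := by
    have hpow : Tendsto (fun c : ℝ => c ^ k) (𝓝[>] 0) (𝓝 0) := by
      simpa [hk] using ((continuous_pow k).tendsto (0 : ℝ)).mono_left nhdsWithin_le_nhds
    simpa using ENNReal.Tendsto.mul_const (ENNReal.tendsto_ofReal hpow) (Or.inr hC)
  have hsmall := hlim.eventually (Iic_mem_nhds (ENNReal.ofReal_pos.2 hε))
  exact (eventually_mem_nhdsWithin.and hsmall).exists

section Isometries

variable {E : Type*} [NormedAddCommGroup E]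

theorem eLpNorm_sqrt_abs_deriv_smul_comp [NormedSpace ℝ E] {s : Set ℝ} {ψ ψ' : ℝ → ℝ}
    (hs : MeasurableSet s) (hψ : ∀ x ∈ s, HasDerivWithinAt ψ (ψ' x) s x) (hinj : Set.InjOn ψ s)
    (f : ℝ → E) :
    eLpNorm (fun x => √|ψ' x| • f (ψ x)) 2 (volume.restrict s) =
      eLpNorm f 2 (volume.restrict (ψ '' s)) := by
  simp only [eLpNorm_eq_lintegral_rpow_enorm_toReal two_ne_zero ENNReal.ofNat_ne_top,
    ENNReal.toReal_ofNat, ENNReal.rpow_two]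
  rw [lintegral_image_eq_lintegral_abs_deriv_mul hs hψ hinj]
  congr! 3 with x
  rw [enorm_smul, mul_pow, Real.enorm_of_nonneg (Real.sqrt_nonneg _),
    ← ENNReal.ofReal_pow (Real.sqrt_nonneg _), Real.sq_sqrt (abs_nonneg _)]

/-- The `L²`-unitary dilation for `c ≠ 0`, which makes derivatives negligible as `c → 0`. -/
noncomputable def dilate [NormedSpace ℝ E] (c : ℝ) (f : ℝ → E) (x : ℝ) : E :=
  √|c| • f (c * x)

/-- The transform `L²(ℝ) → L²(0, ∞)` induced by the substitution `q = eᵗ`, extended by zero: for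
`q ≤ 0` the factor `√(q⁻¹)` vanishes. -/
noncomputable def logPullback [NormedSpace ℝ E] (f : ℝ → E) (q : ℝ) : E :=
  √(q⁻¹) • f (Real.log q)

/-- Multiplication by the unimodular function `exp (i θ)`, which shifts the eigenvalues of `∂_t` for
linear `θ` and removes the potential of the inverted oscillator for quadratic `θ`. -/
noncomputable def modulate [NormedSpace ℂ E] (θ : ℝ → ℝ) (f : ℝ → E) (x : ℝ) : E :=
  cexp (θ x * I) • f x

section Dilation

variable [NormedSpace ℝ E] {c : ℝ} {f : ℝ → E}

theorem eLpNorm_dilate (hc : c ≠ 0) (f : ℝ → E) :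
    eLpNorm (dilate c f) 2 volume = eLpNorm f 2 volume := by
  have h := eLpNorm_sqrt_abs_deriv_smul_comp (ψ := (c * ·)) MeasurableSet.univ
    (fun x _ => ((hasDerivAt_id x).const_mul c).hasDerivWithinAt)
    (mul_right_injective₀ hc).injOn f
  rw [Set.image_univ, (mul_left_surjective₀ hc).range_eq, Measure.restrict_univ] at h
  simp only [mul_one] at h
  exact h

theorem contDiff_dilate {n : ℕ∞ω} (hf : ContDiff ℝ n f) : ContDiff ℝ n (dilate c f) :=
  contDiff_const.smul (hf.comp (contDiff_const.mul contDiff_id))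

theorem hasCompactSupport_dilate (hc : c ≠ 0) (hf : HasCompactSupport f) :
    HasCompactSupport (dilate c f) :=
  (hf.comp_smul hc).smul_left

theorem deriv_dilate (c : ℝ) (f : ℝ → E) : deriv (dilate c f) = c • dilate c (deriv f) := by
  ext x
  have h : deriv (dilate c f) x = √|c| • deriv (fun y => f (c * y)) x :=
    deriv_fun_const_smul_field _ _
  rw [h, deriv_comp_mul_left, smul_comm]
  rfl

theorem deriv_deriv_dilate (c : ℝ) (f : ℝ → E) :
    deriv (deriv (dilate c f)) = c ^ 2 • dilate c (deriv (deriv f)) := by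
  have h : deriv (c • dilate c (deriv f)) = c • deriv (dilate c (deriv f)) :=
    funext fun _ => deriv_const_smul_field _ _
  rw [deriv_dilate, h, deriv_dilate, smul_smul, sq]

end Dilation

section LogPullback

variable [NormedSpace ℝ E] {f : ℝ → E}

theorem logPullback_of_nonpos (f : ℝ → E) {q : ℝ} (hq : q ≤ 0) : logPullback f q = 0 := by
  rw [logPullback, Real.sqrt_eq_zero_of_nonpos (inv_nonpos.2 hq), zero_smul]

theorem eLpNorm_logPullback (f : ℝ → E) :
    eLpNorm (logPullback f) 2 volume = eLpNorm f 2 volume := by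
  have h_supp : (logPullback f).support ⊆ Set.Ioi 0 := fun q hq => by
    contrapose! hq
    exact Function.notMem_support.2 (logPullback_of_nonpos f (not_lt.1 hq))
  have h_abs : Set.EqOn (logPullback f) (fun q => √|q⁻¹| • f (Real.log q)) (Set.Ioi 0) :=
    fun q hq => by
      simp only [logPullback, abs_of_pos (inv_pos.2 (Set.mem_Ioi.1 hq))]
  rw [← eLpNorm_restrict_eq_of_support_subset h_supp,
    eLpNorm_congr_ae (h_abs.aeEq_restrict measurableSet_Ioi),
    eLpNorm_sqrt_abs_deriv_smul_comp measurableSet_Ioi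
      (fun q hq => (Real.hasDerivAt_log (ne_of_gt hq)).hasDerivWithinAt)
      Real.strictMonoOn_log.injOn,
    Real.surjOn_log.image_eq_of_mapsTo (Set.mapsTo_univ _ _), Measure.restrict_univ]

theorem support_logPullback_subset (f : ℝ → E) :
    (logPullback f).support ⊆ Real.exp '' tsupport f := by
  intro q hq
  have hq_pos : 0 < q := by
    contrapose! hq
    exact Function.notMem_support.2 (logPullback_of_nonpos f hq)
  exact ⟨Real.log q, subset_tsupport f fun h => hq (by simp [logPullback, h]), Real.exp_log hq_pos⟩

theorem hasCompactSupport_logPullback (hf : HasCompactSupport f) :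
    HasCompactSupport (logPullback f) :=
  .of_support_subset_isCompact (hf.isCompact.image Real.continuous_exp)
    (support_logPullback_subset f)

theorem tsupport_logPullback_subset (hf : HasCompactSupport f) :
    tsupport (logPullback f) ⊆ Set.Ioi 0 := by
  have h_closed : IsClosed (Real.exp '' tsupport f) :=
    (hf.isCompact.image Real.continuous_exp).isClosed
  refine (closure_minimal (support_logPullback_subset f) h_closed).trans ?_
  rintro _ ⟨t, -, rfl⟩
  exact Real.exp_pos t

theorem contDiff_logPullback {n : ℕ∞ω} (hf : ContDiff ℝ n f) (hfc : HasCompactSupport f) :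
    ContDiff ℝ n (logPullback f) := by
  refine contDiff_iff_contDiffAt.2 fun q => ?_
  by_cases hq : q ∈ tsupport (logPullback f)
  · have hq_pos : 0 < q := tsupport_logPullback_subset hfc hq
    exact ((contDiffAt_inv ℝ hq_pos.ne').sqrt (inv_pos.2 hq_pos).ne').smul
      (hf.contDiffAt.comp q (Real.contDiffAt_log.2 hq_pos.ne'))
  · exact contDiffAt_const.congr_of_eventuallyEq (notMem_tsupport_iff_eventuallyEq.1 hq)

end LogPullback

section Modulation

variable [NormedSpace ℂ E] {θ : ℝ → ℝ} {f : ℝ → E}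

theorem eLpNorm_modulate (θ : ℝ → ℝ) (f : ℝ → E) (p : ENNReal) (μ : Measure ℝ) :
    eLpNorm (modulate θ f) p μ = eLpNorm f p μ :=
  eLpNorm_congr_norm_ae <| .of_forall fun x => by
    rw [modulate, norm_smul, norm_exp_ofReal_mul_I, one_mul]

theorem contDiff_modulate {n : ℕ∞ω} (hθ : ContDiff ℝ n θ) (hf : ContDiff ℝ n f) :
    ContDiff ℝ n (modulate θ f) :=
  ((ofRealCLM.contDiff.comp hθ).mul contDiff_const).cexp.smul hf

theorem hasCompactSupport_modulate (θ : ℝ → ℝ) (hf : HasCompactSupport f) :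
    HasCompactSupport (modulate θ f) :=
  hf.smul_left

theorem deriv_modulate (hθ : Differentiable ℝ θ) (hf : Differentiable ℝ f) :
    deriv (modulate θ f) = modulate θ fun x => deriv f x + (I * deriv θ x) • f x := by
  ext x
  have hexp := ((hθ x).hasDerivAt.ofReal_comp.mul_const I).cexp
  refine (hexp.smul (hf x).hasDerivAt).deriv.trans ?_
  simp only [modulate, smul_add, smul_smul, mul_comm I]

end Modulation

end Isometries

section DilationGenerator

variable {E : Type*} [NormedAddCommGroup E] [NormedSpace ℝ E]

/-- The operator `q ∂_q + ½`, which commutes with the unitary dilations of `L²(ℝ)` and generates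
them. -/
noncomputable def dilationGenerator (f : ℝ → E) (q : ℝ) : E :=
  q • deriv f q + (1 / 2 : ℝ) • f q

theorem dilationGenerator_dilate (c : ℝ) (f : ℝ → E) :
    dilationGenerator (dilate c f) = dilate c (dilationGenerator f) := by
  ext q
  rw [dilationGenerator, deriv_dilate]
  simp only [dilate, dilationGenerator, Pi.smul_apply]
  module

theorem continuous_dilationGenerator {f : ℝ → E} (hf : ContDiff ℝ 1 f) :
    Continuous (dilationGenerator f) :=
  (continuous_id.smul (hf.continuous_deriv le_rfl)).add (hf.continuous.const_smul _)

theorem deriv_logPullback_of_neg (f : ℝ → E) {q : ℝ} (hq : q < 0) :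
    deriv (logPullback f) q = 0 := by
  have h : logPullback f =ᶠ[𝓝 q] fun _ => 0 := by
    filter_upwards [Iio_mem_nhds hq] with x hx using logPullback_of_nonpos f (le_of_lt hx)
  rw [h.deriv_eq, deriv_const]

theorem hasDerivAt_logPullback {f : ℝ → E} (hf : Differentiable ℝ f) {q : ℝ} (hq : 0 < q) :
    HasDerivAt (logPullback f) (q⁻¹ • (logPullback (deriv f) q - (1 / 2 : ℝ) • logPullback f q))
      q := by
  have h_sqrt : HasDerivAt (fun x : ℝ => √(x⁻¹)) (-(q⁻¹ * √(q⁻¹) / 2)) q := by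
    refine ((hasDerivAt_inv hq.ne').sqrt (inv_pos.2 hq).ne').congr_deriv ?_
    have hs : √(q⁻¹) ≠ 0 := (Real.sqrt_pos.2 (inv_pos.2 hq)).ne'
    have hsq : √(q⁻¹) ^ 2 = q⁻¹ := Real.sq_sqrt (inv_pos.2 hq).le
    rw [div_eq_iff (mul_ne_zero two_ne_zero hs)]
    linear_combination q⁻¹ * hsq
  refine (h_sqrt.smul ((hf _).hasDerivAt.scomp q (Real.hasDerivAt_log hq.ne'))).congr_deriv ?_
  simp only [logPullback, Function.comp_apply]
  module

theorem dilationGenerator_logPullback {f : ℝ → E} (hf : Differentiable ℝ f) :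
    dilationGenerator (logPullback f) = logPullback (deriv f) := by
  ext q
  rcases lt_trichotomy q 0 with hq | rfl | hq
  · simp [dilationGenerator, deriv_logPullback_of_neg f hq, logPullback_of_nonpos _ hq.le]
  · simp [dilationGenerator, logPullback_of_nonpos]
  · rw [dilationGenerator, (hasDerivAt_logPullback hf hq).deriv, smul_inv_smul₀ hq.ne',
      sub_add_cancel]

end DilationGenerator

section ApproxEigenvalue

variable {L L' : (ℝ → ℂ) → ℝ → ℂ} {μ μ' : ℂ}

/-- `μ` is an approximate eigenvalue of the operator `L` on `L²(ℝ)`, in the sense of Weyl's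
criterion with normalized smooth compactly supported functions as witnesses. -/
def IsApproxEigenvalue (L : (ℝ → ℂ) → ℝ → ℂ) (μ : ℂ) : Prop :=
  ∀ ε : ℝ, 0 < ε → ∃ φ : ℝ → ℂ, ContDiff ℝ ∞ φ ∧ HasCompactSupport φ ∧
    eLpNorm φ 2 volume = 1 ∧ eLpNorm (L φ - μ • φ) 2 volume ≤ ENNReal.ofReal ε

theorem IsApproxEigenvalue.of_intertwining (h : IsApproxEigenvalue L μ)
    (U : (ℝ → ℂ) → ℝ → ℂ)
    (hU_smooth : ∀ f, ContDiff ℝ ∞ f → HasCompactSupport f → ContDiff ℝ ∞ (U f))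
    (hU_supp : ∀ f, HasCompactSupport f → HasCompactSupport (U f))
    (hU_norm : ∀ f, eLpNorm (U f) 2 volume = eLpNorm f 2 volume)
    (hU : ∀ f, ContDiff ℝ ∞ f → L' (U f) - μ' • U f = U (L f - μ • f)) :
    IsApproxEigenvalue L' μ' := by
  intro ε hε
  obtain ⟨f, hf, hfc, hf_norm, hf_le⟩ := h ε hε
  exact ⟨U f, hU_smooth f hf hfc, hU_supp f hfc, (hU_norm f).trans hf_norm,
    by rwa [hU f hf, hU_norm]⟩

theorem isApproxEigenvalue_deriv_zero : IsApproxEigenvalue deriv 0 := by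
  intro ε hε
  obtain ⟨f, hf, hfc, hf_norm⟩ :=
    exists_contDiff_hasCompactSupport_eLpNorm_eq_one (V := ℝ) (E := ℂ) volume two_ne_zero
  have hf'_top : eLpNorm (deriv f) 2 volume ≠ ⊤ :=
    ((hf.continuous_deriv (by simp)).memLp_of_hasCompactSupport hfc.deriv).eLpNorm_ne_top
  obtain ⟨c, hc, hc_le⟩ := exists_pos_ofReal_pow_mul_le one_ne_zero hf'_top hε
  refine ⟨dilate c f, contDiff_dilate hf, hasCompactSupport_dilate hc.ne' hfc,
    (eLpNorm_dilate hc.ne' f).trans hf_norm, ?_⟩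
  rwa [zero_smul, sub_zero, deriv_dilate, eLpNorm_const_smul, eLpNorm_dilate hc.ne',
    Real.enorm_of_nonneg hc.le, ← pow_one c]

theorem isApproxEigenvalue_deriv (κ : ℝ) : IsApproxEigenvalue deriv (I * κ) := by
  have hθ : ContDiff ℝ ∞ (fun t : ℝ => κ * t) := contDiff_const.mul contDiff_id
  refine isApproxEigenvalue_deriv_zero.of_intertwining (modulate fun t => κ * t)
    (fun f hf _ => contDiff_modulate hθ hf) (fun f => hasCompactSupport_modulate _)
    (fun f => eLpNorm_modulate _ f 2 volume) fun f hf => ?_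
  rw [deriv_modulate (hθ.differentiable (by simp)) (hf.differentiable (by simp))]
  ext t
  simp [modulate]
  ring

theorem isApproxEigenvalue_dilationGenerator (κ : ℝ) :
    IsApproxEigenvalue dilationGenerator (I * κ) := by
  refine (isApproxEigenvalue_deriv κ).of_intertwining logPullback
    (fun f => contDiff_logPullback) (fun f => hasCompactSupport_logPullback)
    eLpNorm_logPullback fun f hf => ?_
  rw [dilationGenerator_logPullback (hf.differentiable (by simp))]
  ext q
  simp only [logPullback, Pi.sub_apply, Pi.smul_apply, smul_sub, smul_comm _ (I * (κ : ℂ))]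

theorem IsApproxEigenvalue.const_smul (h : IsApproxEigenvalue L μ) (a : ℂ) :
    IsApproxEigenvalue (fun φ => a • L φ) (a * μ) := by
  intro ε hε
  obtain ⟨δ, hδ, hδ_lt⟩ := exists_pos_mul_lt hε ‖a‖
  obtain ⟨f, hf, hfc, hf_norm, hf_le⟩ := h δ hδ
  refine ⟨f, hf, hfc, hf_norm, ?_⟩
  calc eLpNorm (a • L f - (a * μ) • f) 2 volume
      = ‖a‖ₑ * eLpNorm (L f - μ • f) 2 volume := by
        rw [mul_smul, ← smul_sub, eLpNorm_const_smul]
    _ ≤ ‖a‖ₑ * ENNReal.ofReal δ := by gcongr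
    _ = ENNReal.ofReal (‖a‖ * δ) := by
        rw [ENNReal.ofReal_mul (norm_nonneg a), ofReal_norm]
    _ ≤ ENNReal.ofReal ε := ENNReal.ofReal_le_ofReal hδ_lt.le

theorem IsApproxEigenvalue.add_smul_deriv_deriv (h : IsApproxEigenvalue L μ)
    (hL_dilate : ∀ c f, L (dilate c f) = dilate c (L f))
    (hL_cont : ∀ f, ContDiff ℝ ∞ f → Continuous (L f)) (a : ℂ) :
    IsApproxEigenvalue (fun φ => L φ + a • deriv (deriv φ)) μ := by
  intro ε hε
  obtain ⟨f, hf, hfc, hf_norm, hf_le⟩ := h (ε / 2) (half_pos hε)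
  have hf'' : Continuous (a • deriv (deriv f)) :=
    ((contDiff_infty_iff_deriv.1 hf).2.continuous_deriv (by simp)).const_smul a
  have hf''_top : eLpNorm (a • deriv (deriv f)) 2 volume ≠ ⊤ :=
    (hf''.memLp_of_hasCompactSupport hfc.deriv.deriv.smul_left).eLpNorm_ne_top
  obtain ⟨c, hc, hc_le⟩ := exists_pos_ofReal_pow_mul_le two_ne_zero hf''_top (half_pos hε)
  refine ⟨dilate c f, contDiff_dilate hf, hasCompactSupport_dilate hc.ne' hfc,
    (eLpNorm_dilate hc.ne' f).trans hf_norm, ?_⟩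
  have h_dilate : L (dilate c f) + a • deriv (deriv (dilate c f)) - μ • dilate c f =
      dilate c ((L f - μ • f) + c ^ 2 • a • deriv (deriv f)) := by
    rw [hL_dilate, deriv_deriv_dilate]
    ext x
    simp [dilate]
    ring
  calc eLpNorm (L (dilate c f) + a • deriv (deriv (dilate c f)) - μ • dilate c f) 2 volume
      = eLpNorm ((L f - μ • f) + c ^ 2 • a • deriv (deriv f)) 2 volume := by
        rw [h_dilate, eLpNorm_dilate hc.ne']
    _ ≤ eLpNorm (L f - μ • f) 2 volume + eLpNorm (c ^ 2 • a • deriv (deriv f)) 2 volume :=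
        eLpNorm_add_le ((hL_cont f hf).sub (hf.continuous.const_smul μ)).aestronglyMeasurable
          (hf''.const_smul _).aestronglyMeasurable one_le_two
    _ ≤ ENNReal.ofReal (ε / 2) + ENNReal.ofReal (ε / 2) := by
        rw [eLpNorm_const_smul, Real.enorm_of_nonneg (sq_nonneg c)]
        gcongr
    _ = ENNReal.ofReal ε := by
        rw [← ENNReal.ofReal_add (half_pos hε).le (half_pos hε).le, add_halves]

end ApproxEigenvalue

section Oscillator

/-- The inverted harmonic oscillator `−½ ∂_q² − (w²/2) q²`, where `w` is the paper's `E′`. -/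
noncomputable def invertedOscillator (w : ℝ) (φ : ℝ → ℂ) (q : ℝ) : ℂ :=
  -(1 / 2 : ℂ) * deriv (deriv φ) q - ((w ^ 2 / 2 : ℝ) : ℂ) * (q : ℂ) ^ 2 * φ q

/-- The conjugate of `invertedOscillator w` by multiplication with `exp (i w q² / 2)`, in which no
potential is left. -/
noncomputable def chirpedOscillator (w : ℝ) (φ : ℝ → ℂ) : ℝ → ℂ :=
  -(I * w) • dilationGenerator φ + (-1 / 2 : ℂ) • deriv (deriv φ)

/-- The phase of the chirp `exp (i w q² / 2)` that conjugates away the potential `−(w²/2) q²`. -/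
noncomputable def chirpPhase (w q : ℝ) : ℝ :=
  w / 2 * q ^ 2

theorem contDiff_chirpPhase (w : ℝ) {n : ℕ∞ω} : ContDiff ℝ n (chirpPhase w) :=
  contDiff_const.mul (contDiff_id.pow 2)

theorem deriv_modulate_chirpPhase (w : ℝ) {f : ℝ → ℂ} (hf : Differentiable ℝ f) :
    deriv (modulate (chirpPhase w) f) =
      modulate (chirpPhase w) fun q => deriv f q + I * w * q * f q := by
  have hθ (q : ℝ) : deriv (chirpPhase w) q = w * q :=
    (((hasDerivAt_pow 2 q).const_mul (w / 2)).congr_deriv (by push_cast; ring)).deriv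
  rw [deriv_modulate ((contDiff_chirpPhase w (n := 1)).differentiable one_ne_zero) hf]
  simp only [hθ, smul_eq_mul, ofReal_mul, mul_assoc]

theorem invertedOscillator_modulate_chirpPhase (w : ℝ) {f : ℝ → ℂ} (hf : Differentiable ℝ f)
    (hf' : Differentiable ℝ (deriv f)) :
    invertedOscillator w (modulate (chirpPhase w) f) =
      modulate (chirpPhase w) (chirpedOscillator w f) := by
  have h_deriv (q : ℝ) : HasDerivAt (fun q : ℝ => deriv f q + I * w * q * f q)
      (deriv (deriv f) q + (I * w * f q + I * w * q * deriv f q)) q := by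
    have h_mul := (ofRealCLM.hasDerivAt (x := q)).const_mul (I * w)
    simpa [Pi.mul_def, Pi.add_def] using (hf' q).hasDerivAt.add (h_mul.mul (hf q).hasDerivAt)
  ext q
  rw [invertedOscillator, deriv_modulate_chirpPhase w hf,
    deriv_modulate_chirpPhase w fun q => (h_deriv q).differentiableAt]
  simp only [(h_deriv q).deriv, modulate, chirpedOscillator, dilationGenerator, Pi.add_apply,
    Pi.smul_apply, smul_eq_mul, real_smul]
  push_cast
  linear_combination
    (-(1 / 2) * cexp (chirpPhase w q * I) * w ^ 2 * q ^ 2 * f q) * I_sq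

theorem isApproxEigenvalue_chirpedOscillator (w κ : ℝ) :
    IsApproxEigenvalue (chirpedOscillator w) (w * κ) := by
  have h := (isApproxEigenvalue_dilationGenerator κ).const_smul (-(I * w))
  have h_energy : -(I * w) * (I * κ) = w * κ := by
    linear_combination (-(w * κ) : ℂ) * I_sq
  rw [h_energy] at h
  refine h.add_smul_deriv_deriv (fun c f => ?_) (fun f hf => ?_) (-1 / 2)
  · rw [dilationGenerator_dilate]
    ext q
    simp only [dilate, Pi.smul_apply, smul_comm (-(I * (w : ℂ)))]
  · exact (continuous_dilationGenerator (hf.of_le (by simp))).const_smul _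

theorem isApproxEigenvalue_invertedOscillator {w : ℝ} (hw : w ≠ 0) (e : ℝ) :
    IsApproxEigenvalue (invertedOscillator w) e := by
  have h := isApproxEigenvalue_chirpedOscillator w (e / w)
  rw [← ofReal_mul, mul_div_cancel₀ e hw] at h
  refine h.of_intertwining (modulate (chirpPhase w))
    (fun f hf _ => contDiff_modulate (contDiff_chirpPhase w) hf)
    (fun f => hasCompactSupport_modulate _) (fun f => eLpNorm_modulate _ f 2 volume) fun f hf => ?_
  rw [invertedOscillator_modulate_chirpPhase w (hf.differentiable (by simp))
    ((contDiff_infty_iff_deriv.1 hf).2.differentiable (by simp))]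
  ext q
  simp only [modulate, Pi.sub_apply, Pi.smul_apply, smul_sub, smul_comm _ (e : ℂ)]

end Oscillator

end InvertedOscillator

/-- every real number `𝓔` is an approximate eigenvalue of the
inverted harmonic oscillator `H = ½(−∂_q² − E′²q²)`: there are smooth
compactly supported, `L²`-normalized functions `φ` with
`‖Hφ − 𝓔φ‖_{L²} ≤ ε`.  Hence the spectrum of `H` is all of `ℝ`. -/
theorem inverted_oscillator_spectrum (E' : ℝ) (hE' : 0 < E') (e ε : ℝ)
    (hε : 0 < ε) :
    ∃ φ : ℝ → ℂ, ContDiff ℝ (⊤ : ℕ∞) φ ∧ HasCompactSupport φ ∧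
      eLpNorm φ 2 volume = 1 ∧
      eLpNorm (fun q : ℝ =>
          -(1 / 2 : ℂ) * deriv (deriv φ) q
            - ((E' ^ 2 / 2 : ℝ) : ℂ) * (q : ℂ) ^ 2 * φ q - (e : ℂ) * φ q)
        2 volume ≤ ENNReal.ofReal ε := by
  exact InvertedOscillator.isApproxEigenvalue_invertedOscillator hE'.ne' e ε hε
end
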